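/- Let n ≥ 4, let 0 < Z ≤ 2^n and set a = ⌊log_2 Z⌋. Let s and c be integers with 2^n - 2^s < c < 2^n - 2^{s-1}. Then the number of all 2^n-periodic binary sequences S (of arbitrary Hamming weight) with L_{1;Z}(S) = c equals 2^{c-1} + 2^{c-1+s} if s ≤ a, and equals (1 + Z) · 2^{c-1} if s > a. -/

import Mathlib

/-- Generating polynomial `S^N(x) = s_0 + s_1 x + ... + s_{N-1} x^{N-1}` of one period
of an `N`-periodic binary sequence. -/
noncomputable def genPoly {N : ℕ} (S : Fin N → ZMod 2) : Polynomial (ZMod 2) :=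
  ∑ i : Fin N, Polynomial.C (S i) * Polynomial.X ^ (i : ℕ)

/-- Linear complexity `L(S) = N - deg (gcd (1 - x^N, S^N(x)))`. -/
noncomputable def linComp {N : ℕ} (S : Fin N → ZMod 2) : ℕ :=
  N - (EuclideanDomain.gcd (1 - Polynomial.X ^ N) (genPoly S)).natDegree

/-- Hamming weight of one period of an `N`-periodic binary sequence. -/
def wt {N : ℕ} (T : Fin N → ZMod 2) : ℕ :=
  (Finset.univ.filter (fun i => T i ≠ 0)).card

/-- `k`-error linear complexity `L_{N,k}(S)`. -/
noncomputable def errLC {N : ℕ} (S : Fin N → ZMod 2) (k : ℕ) : ℕ :=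
  sInf {c | ∃ T : Fin N → ZMod 2, wt T ≤ k ∧ linComp (S + T) = c}

/-- `k`-error linear complexity with a zone of length `Z`: `L_{N,k;Z}(S)`. -/
noncomputable def errLCZone {N : ℕ} (S : Fin N → ZMod 2) (k Z : ℕ) : ℕ :=
  sInf {c | ∃ T : Fin N → ZMod 2, wt T ≤ k ∧ (∀ i : Fin N, Z ≤ (i : ℕ) → T i = 0) ∧
    linComp (S + T) = c}

/-- `E_1(j)`: the sequence whose only nonzero term in one period is a `1` at position `j`. -/
def E1 {N : ℕ} (j : Fin N) : Fin N → ZMod 2 :=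
  fun i => if i = j then 1 else 0

open Polynomial in
lemma genPoly_coeff {N : ℕ} (S : Fin N → ZMod 2) (k : ℕ) :
    (genPoly S).coeff k = if h : k < N then S ⟨k, h⟩ else 0 := by
  unfold genPoly
  simp only [finset_sum_coeff, coeff_C_mul, coeff_X_pow]
  split_ifs with h
  · rw [Finset.sum_eq_single ⟨k, h⟩]
    · simp
    · intro b _ hb
      have : k ≠ (b : ℕ) := fun h' => hb (Fin.ext h'.symm)
      simp [this]
    · simp
  · apply Finset.sum_eq_zero
    intro i _
    have : k ≠ (i : ℕ) := by have := i.2; omega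
    simp [this]

lemma genPoly_inj {N : ℕ} {S T : Fin N → ZMod 2} (h : genPoly S = genPoly T) : S = T := by
  funext i
  have := congrArg (fun p => Polynomial.coeff p (i : ℕ)) h
  simpa [genPoly_coeff] using this

lemma genPoly_add {N : ℕ} (S T : Fin N → ZMod 2) :
    genPoly (S + T) = genPoly S + genPoly T := by
  simp [genPoly, add_mul, Finset.sum_add_distrib]

lemma genPoly_zero {N : ℕ} : genPoly (0 : Fin N → ZMod 2) = 0 := by
  simp [genPoly]

lemma genPoly_E1 {N : ℕ} (j : Fin N) : genPoly (E1 j) = Polynomial.X ^ (j : ℕ) := by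
  ext k
  rw [genPoly_coeff, Polynomial.coeff_X_pow]
  unfold E1
  split_ifs with h h' <;> simp_all [Fin.ext_iff]

lemma genPoly_degree {N : ℕ} (S : Fin N → ZMod 2) : (genPoly S).degree < N := by
  rw [Polynomial.degree_lt_iff_coeff_zero]
  intro m hm
  rw [genPoly_coeff, dif_neg (by omega)]

lemma genPoly_surj {N : ℕ} (p : Polynomial (ZMod 2)) (hp : p.degree < N) :
    ∃ S : Fin N → ZMod 2, genPoly S = p := by
  refine ⟨fun i => p.coeff i, ?_⟩
  ext k
  rw [genPoly_coeff]
  split_ifs with h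
  · rfl
  · rw [Polynomial.degree_lt_iff_coeff_zero] at hp
    exact (hp k (by omega)).symm

open Polynomial in
lemma one_sub_pow (n : ℕ) : (1 - X ^ (2^n) : (ZMod 2)[X]) = (X - 1) ^ (2^n) := by
  rw [sub_pow_char_pow, one_pow]
  rw [CharTwo.sub_eq_add, CharTwo.sub_eq_add, add_comm]

open Polynomial in
lemma linComp_le_iff {n : ℕ} (S : Fin (2^n) → ZMod 2) (j : ℕ) (hj : j ≤ 2^n) :
    linComp S ≤ 2^n - j ↔ (X - 1 : (ZMod 2)[X]) ^ j ∣ genPoly S := by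
  unfold linComp
  rw [one_sub_pow]
  have hm : (X - 1 : (ZMod 2)[X]).Monic := by simpa using monic_X_sub_C (1 : ZMod 2)
  have hd : (X - 1 : (ZMod 2)[X]).natDegree = 1 := by simpa using natDegree_X_sub_C (1 : ZMod 2)
  have hp : Prime (X - 1 : (ZMod 2)[X]) := by simpa using prime_X_sub_C (1 : ZMod 2)
  obtain ⟨i, hi, hass⟩ := (dvd_prime_pow hp (2^n)).1
    (EuclideanDomain.gcd_dvd_left ((X - 1 : (ZMod 2)[X]) ^ (2^n)) (genPoly S))
  have hdeg := natDegree_eq_of_degree_eq (degree_eq_degree_of_associated hass)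
  rw [hm.natDegree_pow, hd, mul_one] at hdeg
  rw [hdeg]
  constructor
  · intro h
    have : j ≤ i := by omega
    exact (pow_dvd_pow _ this).trans (hass.symm.dvd.trans (EuclideanDomain.gcd_dvd_right _ _))
  · intro h
    have h2 := EuclideanDomain.dvd_gcd (pow_dvd_pow (X - 1 : (ZMod 2)[X]) hj) h
    have h3 := h2.trans hass.dvd
    have := (pow_dvd_pow_iff hp.ne_zero hp.not_unit).1 h3
    omega

open Polynomial in
lemma linComp_le_iff2 {n : ℕ} (S : Fin (2^n) → ZMod 2) (m : ℕ) (hm : m ≤ 2^n) :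
    linComp S ≤ m ↔ (X - 1 : (ZMod 2)[X]) ^ (2^n - m) ∣ genPoly S := by
  rw [← linComp_le_iff S _ (by omega)]
  rw [Nat.sub_sub_self hm]

lemma linComp_add_le {n : ℕ} {S T : Fin (2^n) → ZMod 2} {m : ℕ} (hm : m ≤ 2^n)
    (hS : linComp S ≤ m) (hT : linComp T ≤ m) : linComp (S + T) ≤ m := by
  rw [linComp_le_iff2 _ _ hm] at *
  rw [genPoly_add]
  exact dvd_add hS hT

open Polynomial in
lemma ncard_linComp_le {n m : ℕ} (hm : m ≤ 2^n) :
    {S : Fin (2^n) → ZMod 2 | linComp S ≤ m}.ncard = 2^m := by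
  have hmon : (X - 1 : (ZMod 2)[X]).Monic := by simpa using monic_X_sub_C (1 : ZMod 2)
  have hd : (X - 1 : (ZMod 2)[X]).natDegree = 1 := by simpa using natDegree_X_sub_C (1 : ZMod 2)
  set q := (X - 1 : (ZMod 2)[X]) ^ (2^n - m) with hq
  have hqm : q.Monic := hmon.pow _
  have hqd : q.degree = ((2^n - m : ℕ) : WithBot ℕ) := by
    rw [degree_eq_natDegree hqm.ne_zero, hq, hmon.natDegree_pow, hd, mul_one]
  have key : ∀ p : (ZMod 2)[X], (q * p).degree < ((2^n : ℕ) : WithBot ℕ) ↔ p.degree < (m : WithBot ℕ) := by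
    intro p
    by_cases hp : p = 0
    · rw [hp, mul_zero, degree_zero]; exact iff_of_true (WithBot.bot_lt_coe _) (WithBot.bot_lt_coe _)
    · rw [degree_mul, hqd, degree_eq_natDegree hp]
      norm_cast
      omega
  have h1 : ∀ Q : Fin m → ZMod 2, ∃ S : Fin (2^n) → ZMod 2, genPoly S = q * genPoly Q := fun Q =>
    genPoly_surj _ ((key _).2 (genPoly_degree Q))
  choose f hf using h1
  have hinj : Function.Injective f := by
    intro Q Q' h
    have := hf Q
    rw [h, hf Q'] at this
    exact (genPoly_inj (mul_left_cancel₀ hqm.ne_zero this)).symm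
  have : {S : Fin (2^n) → ZMod 2 | linComp S ≤ m} = Set.range f := by
    ext S
    simp only [Set.mem_setOf_eq, Set.mem_range]
    rw [linComp_le_iff2 _ _ hm, ← hq]
    constructor
    · rintro ⟨p, hp⟩
      have hdp : p.degree < (m : WithBot ℕ) := by
        rw [← key, ← hp]; exact genPoly_degree S
      obtain ⟨Q, hQ⟩ := genPoly_surj p hdp
      exact ⟨Q, genPoly_inj (by rw [hf, hQ, hp])⟩
    · rintro ⟨Q, rfl⟩
      exact ⟨_, hf Q⟩
  rw [this, ← Set.image_univ, Set.ncard_image_of_injective _ hinj, Set.ncard_univ]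
  simp

lemma ncard_linComp_eq {n c : ℕ} (hc0 : 0 < c) (hc : c ≤ 2^n) :
    {S : Fin (2^n) → ZMod 2 | linComp S = c}.ncard = 2^(c-1) := by
  have h : {S : Fin (2^n) → ZMod 2 | linComp S = c} =
      {S | linComp S ≤ c} \ {S | linComp S ≤ c - 1} := by
    ext S; simp only [Set.mem_setOf_eq, Set.mem_diff]; omega
  rw [h, Set.ncard_sdiff (by intro S; simp only [Set.mem_setOf_eq]; omega) (Set.toFinite _),
    ncard_linComp_le hc, ncard_linComp_le (by omega)]
  obtain ⟨d, rfl⟩ : ∃ d, c = d + 1 := ⟨c - 1, by omega⟩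
  simp [pow_succ]; omega

open Polynomial in
lemma dvd_of_modEq {s i j : ℕ} (h : i ≡ j [MOD 2^s]) :
    (X - 1 : (ZMod 2)[X]) ^ (2^s) ∣ X ^ i + X ^ j := by
  wlog hij : j ≤ i generalizing i j
  · rw [add_comm]; exact this h.symm (by omega)
  obtain ⟨k, hk⟩ := (Nat.modEq_iff_dvd' hij).1 h.symm
  obtain rfl : i = j + 2^s * k := by omega
  rw [← CharTwo.sub_eq_add, sub_pow_char_pow, one_pow]
  have : (X ^ (j + 2^s*k) - X ^ j : (ZMod 2)[X]) = ((X ^ (2^s)) ^ k - 1 ^ k) * X ^ j := by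
    rw [pow_add, pow_mul]; ring
  rw [this]
  exact (sub_dvd_pow_sub_pow _ _ _).mul_right _

open Polynomial in
lemma modEq_of_dvd {s t i j : ℕ} (ht : 2^(s-1) < t)
    (h : (X - 1 : (ZMod 2)[X]) ^ t ∣ X ^ i + X ^ j) : i ≡ j [MOD 2^s] := by
  wlog hij : j ≤ i generalizing i j
  · rw [add_comm] at h; exact (this h (by omega)).symm
  rcases Nat.eq_zero_or_pos (i - j) with h0 | h0
  · obtain rfl : i = j := by omega
    rfl
  obtain ⟨v, m, hm, hvm⟩ := Nat.exists_eq_two_pow_mul_odd h0.ne'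
  refine ((Nat.modEq_iff_dvd' hij).2 ?_).symm
  rw [hvm]
  by_cases hv : s ≤ v
  · exact (pow_dvd_pow 2 hv).mul_right _
  exfalso
  obtain rfl : i = j + 2^v * m := by omega
  have hp : (X - 1 : (ZMod 2)[X]) ≠ 0 := by simpa using X_sub_C_ne_zero (1 : ZMod 2)
  have hlt : 2^v + 1 ≤ t := by
    have : 2^v ≤ 2^(s-1) := Nat.pow_le_pow_right (by norm_num) (by omega)
    omega
  have h2 := (pow_dvd_pow (X - 1 : (ZMod 2)[X]) hlt).trans h
  have e : (X ^ (j + 2^v*m) + X ^ j : (ZMod 2)[X])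
      = (X - 1) ^ (2^v) * (X ^ j * (∑ k ∈ Finset.range m, X ^ k) ^ (2^v)) := by
    have e1 : (X ^ m - 1 : (ZMod 2)[X]) = (X - 1) * ∑ k ∈ Finset.range m, X ^ k :=
      (mul_geom_sum X m).symm
    rw [← CharTwo.sub_eq_add, mul_left_comm, ← mul_pow, ← e1, sub_pow_char_pow, one_pow, pow_add,
      mul_comm (2^v) m, pow_mul]
    ring
  rw [e, pow_succ] at h2
  have h3 := (mul_dvd_mul_iff_left (pow_ne_zero _ hp)).1 h2
  rw [← C_1] at h3
  have h4 := h3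
  rw [dvd_iff_isRoot] at h4
  simp only [IsRoot, eval_mul, eval_pow, eval_X, one_pow, one_mul, eval_finset_sum,
    Finset.sum_const, Finset.card_range, nsmul_eq_mul, mul_one] at h4
  rw [ZMod.natCast_eq_one_iff_odd.2 hm, one_pow] at h4
  exact one_ne_zero h4

/-- Error vector of weight at most one. -/
def errV {N : ℕ} : Option (Fin N) → (Fin N → ZMod 2)
  | none => 0
  | some i => E1 i

lemma wt_errV {N : ℕ} (o : Option (Fin N)) : wt (errV o) ≤ 1 := by
  cases o with
  | none => simp [wt, errV]
  | some i =>
    refine Finset.card_le_one.2 fun a ha b hb => ?_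
    simp only [errV, E1, Finset.mem_filter, Finset.mem_univ, true_and, ne_eq, ite_eq_right_iff,
      one_ne_zero, imp_false, not_not] at ha hb
    rw [ha, hb]

lemma exists_errV {N : ℕ} (T : Fin N → ZMod 2) (h : wt T ≤ 1) : ∃ o, T = errV o := by
  have h01 : ∀ x : ZMod 2, x ≠ 0 → x = 1 := by decide
  by_cases h0 : T = 0
  · exact ⟨none, h0⟩
  · obtain ⟨i, hi⟩ := Function.ne_iff.1 h0
    refine ⟨some i, ?_⟩
    funext k
    simp only [errV, E1]
    split_ifs with hk
    · subst hk; exact h01 _ hi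
    · by_contra hk0
      exact hk (Finset.card_le_one.1 h k (by simpa using hk0) i (by simpa using hi))

/-- congruence of error positions -/
def errCong {N : ℕ} (s : ℕ) : Option (Fin N) → Option (Fin N) → Prop
  | none, none => True
  | some i, some j => (i : ℕ) ≡ j [MOD 2^s]
  | _, _ => False

lemma errCong_le {n s : ℕ} (hs : s ≤ n) (o o' : Option (Fin (2^n))) (h : errCong s o o') :
    linComp (errV o + errV o') ≤ 2^n - 2^s := by
  rw [linComp_le_iff _ _ (Nat.pow_le_pow_right (by norm_num) hs), genPoly_add]
  match o, o', h with
  | none, none, _ => simp [errV, genPoly_zero]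
  | some i, some j, h =>
    simp only [errV, genPoly_E1]
    exact dvd_of_modEq h

open Polynomial in
lemma not_dvd_X_pow {t i : ℕ} (ht : 0 < t) : ¬ (X - 1 : (ZMod 2)[X]) ^ t ∣ X ^ i := by
  intro h
  have h2 := (dvd_pow_self (X - 1 : (ZMod 2)[X]) ht.ne').trans h
  have h4 : (X - C 1 : (ZMod 2)[X]) ∣ X ^ i := by simpa using h2
  rw [dvd_iff_isRoot] at h4
  simp at h4

lemma errCong_of_le {n s c : ℕ} (hc : c < 2^n - 2^(s-1)) (o o' : Option (Fin (2^n)))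
    (h : linComp (errV o + errV o') ≤ c) : errCong s o o' := by
  have hpos : 0 < 2^(s-1) := by positivity
  rw [linComp_le_iff2 _ _ (by omega), genPoly_add] at h
  match o, o' with
  | none, none => trivial
  | some i, some j =>
    simp only [errV, genPoly_E1] at h
    exact modEq_of_dvd (by omega) h
  | none, some j =>
    simp only [errV, genPoly_E1, genPoly_zero, zero_add] at h
    exact absurd h (not_dvd_X_pow (by omega))
  | some j, none =>
    simp only [errV, genPoly_E1, genPoly_zero, add_zero] at h
    exact absurd h (not_dvd_X_pow (by omega))

lemma add_self2 {N : ℕ} (S : Fin N → ZMod 2) : S + S = 0 := by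
  funext i; exact CharTwo.add_self_eq_zero _

lemma errV_zone {N Z : ℕ} (o : Option (Fin N)) :
    (∀ i : Fin N, Z ≤ (i : ℕ) → errV o i = 0) ↔ ∀ i, o = some i → (i : ℕ) < Z := by
  cases o with
  | none => simp [errV]
  | some j =>
    simp only [errV, E1, Option.some.injEq]
    constructor
    · rintro h i rfl
      by_contra hi
      simpa using h j (by omega)
    · intro h i hi
      have := h j rfl
      rw [if_neg]
      rintro rfl
      omega

lemma main_count (n Z s c : ℕ) (hZ0 : 0 < Z) (hZ : Z ≤ 2^n)
    (h1 : 2^n - 2^s < c) (h2 : c < 2^n - 2^(s-1)) :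
    {S : Fin (2^n) → ZMod 2 | errLCZone S 1 Z = c}.ncard = (1 + min Z (2^s)) * 2^(c-1) := by
  have hs : s ≤ n := by
    by_contra hs
    have : 2^n ≤ 2^(s-1) := Nat.pow_le_pow_right (by norm_num) (by omega)
    omega
  have hsn : 2^s ≤ 2^n := Nat.pow_le_pow_right (by norm_num) hs
  have hs0 : 0 < 2^s := by positivity
  have hpos : 0 < 2^(s-1) := by positivity
  set M := min Z (2^s) with hM
  have hMZ : M ≤ Z := min_le_left _ _
  have hMs : M ≤ 2^s := min_le_right _ _
  -- representative
  let ι : Option (Fin M) → Option (Fin (2^n)) := Option.map (Fin.castLE (hMZ.trans hZ))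
  have hιcong : ∀ a b, errCong s (ι a) (ι b) → a = b := by
    intro a b h
    match a, b with
    | none, none => rfl
    | none, some _ => exact h.elim
    | some _, none => exact h.elim
    | some i, some j =>
      have h' : (i : ℕ) ≡ j [MOD 2^s] := h
      have := Nat.ModEq.eq_of_lt_of_lt h' (by omega) (by omega)
      rw [Fin.ext this]
  have hιzone : ∀ a i, ι a = some i → (i : ℕ) < Z := by
    intro a i h
    match a with
    | none => simp [ι] at h
    | some j =>
      simp only [ι, Option.map_some, Option.some.injEq] at h
      subst h
      simp only [Fin.val_castLE]
      omega
  have hrep : ∀ o : Option (Fin (2^n)), (∀ i, o = some i → (i : ℕ) < Z) →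
      ∃ a, errCong s o (ι a) := by
    intro o ho
    match o with
    | none => exact ⟨none, trivial⟩
    | some i =>
      have hi := ho i rfl
      have h3 : (i : ℕ) % 2^s < 2^s := Nat.mod_lt _ hs0
      have h4 : (i : ℕ) % 2^s ≤ i := Nat.mod_le _ _
      exact ⟨some ⟨(i : ℕ) % 2^s, by omega⟩, (Nat.mod_modEq _ _).symm⟩
  have hshift : ∀ {U D : Fin (2^n) → ZMod 2}, linComp D ≤ 2^n - 2^s → linComp U = c →
      linComp (U + D) = c := by
    intro U D hD hU
    have hle := linComp_add_le (m := c) (by omega) hU.le (by omega : linComp D ≤ c)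
    by_contra hne
    have h3 := linComp_add_le (m := c - 1) (S := U + D) (T := D) (by omega) (by omega) (by omega)
    rw [add_assoc, add_self2, add_zero] at h3
    omega
  let A := {S : Fin (2^n) → ZMod 2 | linComp S = c}
  let F : Option (Fin M) × (Fin (2^n) → ZMod 2) → (Fin (2^n) → ZMod 2) :=
    fun p => p.2 + errV (ι p.1)
  have hset : {S : Fin (2^n) → ZMod 2 | errLCZone S 1 Z = c} =
      F '' (Set.univ ×ˢ A) := by
    ext S
    simp only [Set.mem_setOf_eq, Set.mem_image, Set.mem_prod, Set.mem_univ, true_and, Prod.exists]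
    constructor
    · intro h
      have hne : {c | ∃ T : Fin (2^n) → ZMod 2, wt T ≤ 1 ∧
          (∀ i : Fin (2^n), Z ≤ (i : ℕ) → T i = 0) ∧ linComp (S + T) = c}.Nonempty :=
        ⟨_, 0, by simp [wt], by simp, rfl⟩
      obtain ⟨T, hT1, hT2, hT3⟩ := Nat.sInf_mem hne
      change linComp (S + T) = errLCZone S 1 Z at hT3
      rw [h] at hT3
      obtain ⟨o, rfl⟩ := exists_errV T hT1
      obtain ⟨a, ha⟩ := hrep o ((errV_zone o).1 hT2)
      have h5 := hshift (errCong_le hs _ _ ha) hT3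
      refine ⟨a, S + errV (ι a), ?_, ?_⟩
      · have e : S + errV o + (errV o + errV (ι a)) = S + errV (ι a) := by
          rw [add_assoc, ← add_assoc (errV o), add_self2, zero_add]
        rw [e] at h5
        exact h5
      · change S + errV (ι a) + errV (ι a) = S
        rw [add_assoc, add_self2, add_zero]
    · rintro ⟨a, U, hU, rfl⟩
      change linComp U = c at hU
      change errLCZone (U + errV (ι a)) 1 Z = c
      apply le_antisymm
      · apply Nat.sInf_le
        refine ⟨errV (ι a), wt_errV _, (errV_zone _).2 (hιzone a), ?_⟩
        rw [add_assoc, add_self2, add_zero, hU]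
      · apply le_csInf
        · exact ⟨_, 0, by simp [wt], by simp, rfl⟩
        · rintro b ⟨T, hT1, hT2, rfl⟩
          obtain ⟨o, rfl⟩ := exists_errV T hT1
          rw [add_assoc]
          by_contra hlt
          have h3 := linComp_add_le (m := c) (S := U) (T := U + (errV (ι a) + errV o))
            (by omega) (by omega) (by omega)
          rw [← add_assoc, add_self2, zero_add] at h3
          have h4 := hshift (errCong_le hs _ _ (errCong_of_le h2 _ _ h3)) hU
          omega
  have hinj : Set.InjOn F (Set.univ ×ˢ A) := by
    rintro ⟨a, U⟩ ⟨-, hU⟩ ⟨b, V⟩ ⟨-, hV⟩ h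
    change linComp U = c at hU
    change linComp V = c at hV
    change U + errV (ι a) = V + errV (ι b) at h
    have e : errV (ι a) + errV (ι b) = U + V := by
      have h6 : U + (U + errV (ι a)) + errV (ι b) = U + (V + errV (ι b)) + errV (ι b) := by rw [h]
      rw [← add_assoc, add_self2, zero_add, add_assoc U, add_assoc V, add_self2, add_zero] at h6
      exact h6
    have h7 := linComp_add_le (m := c) (by omega) hU.le hV.le
    rw [← e] at h7
    obtain rfl := hιcong _ _ (errCong_of_le h2 _ _ h7)
    rw [add_right_cancel h]
  rw [hset, Set.ncard_image_of_injOn hinj, Set.ncard_prod, Set.ncard_univ,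
    ncard_linComp_eq (by omega) (by omega)]
  simp [add_comm]

/-- Counting all `2^n`-periodic sequences with `L_{1;Z}(S) = c` where
`2^n - 2^s < c < 2^n - 2^{s-1}`: the count is `2^{c-1} + 2^{c-1+s}` if `s ≤ a`,
and `(1+Z) · 2^{c-1}` if `s > a`. -/
theorem stmt14 (n Z s c : ℕ) (hn : 4 ≤ n) (hZ0 : 0 < Z) (hZ : Z ≤ 2^n)
    (h1 : 2^n - 2^s < c) (h2 : c < 2^n - 2^(s-1)) :
    (s ≤ Nat.log 2 Z →
      {S : Fin (2^n) → ZMod 2 | errLCZone S 1 Z = c}.ncard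
        = 2^(c - 1) + 2^(c - 1 + s)) ∧
    (Nat.log 2 Z < s →
      {S : Fin (2^n) → ZMod 2 | errLCZone S 1 Z = c}.ncard = (1 + Z) * 2^(c - 1)) := by
  rw [main_count n Z s c hZ0 hZ h1 h2]
  constructor
  · intro h
    have : 2^s ≤ Z := (Nat.le_log_iff_pow_le (by norm_num) hZ0.ne').1 h
    rw [min_eq_right this, pow_add]
    ring
  · intro h
    have : Z < 2^s := (Nat.log_lt_iff_lt_pow (by norm_num) hZ0.ne').1 h
    rw [min_eq_left this.le]
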